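/- Let d ≥ 5, let Q be a non-degenerate d-dimensional quadratic form of block-type, let b ∈ ℝ and M ∈ ℝ^d, and set F_{r,M}(b) = { x ∈ ℝ^d : Q[x−M] ≤ b and |x|_∞ ≤ r }. Then the relative lattice point remainder |(vol_ℤ F_{r,M}(b) − vol F_{r,M}(b)) / vol F_{r,M}(b)| is O(1) as r → ∞, and if Q is irrational it is o(1), i.e. it tends to 0 as r → ∞. -/

import Mathlib

/-!
Far from the origin `F_{r,M}(b)` fills every closed cone on which `Q < 0`, so its volume is of order
`r ^ d`, and the claim is only about the leading order.  Rescaling by `r⁻¹` gives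
`r⁻ᵈ vol F = vol {y | r • y ∈ F}` and, since each lattice point `m` owns the unit cube
`m + [0,1)^d`, also `r⁻ᵈ vol_ℤ F = vol {y | ⌊r • y⌋ ∈ F}`.  Away from the cone `Q = 0` and the unit
sphere, the indicators of both sets converge pointwise to that of `{Q ≤ 0, |y|_∞ ≤ 1}`.  The
exceptional set is null, and dominated convergence shows that both volumes converge to the volume
`V` of this limit region.  As `Q` takes a negative value, `V > 0`, so the relative remainder tends
to `(V - V) / V = 0`.  In particular it is eventually at most `1`, for rational and irrational
forms alike.
-/

open MeasureTheory Filter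

/-- The quadratic form `Q[x] = ⟨Qx, x⟩` associated to a matrix `Q`. -/
noncomputable def quadForm {d : ℕ} (Q : Matrix (Fin d) (Fin d) ℝ) (x : Fin d → ℝ) : ℝ :=
  ∑ i, Q.mulVec x i * x i

/-- `Q` is of block-type: `Q = diag(Q⁺, −Q⁻)` with `Q⁺, Q⁻` positive definite. -/
def IsBlockType {d : ℕ} (Q : Matrix (Fin d) (Fin d) ℝ) : Prop :=
  ∃ (d₁ d₂ : ℕ) (h : d₁ + d₂ = d) (Qp : Matrix (Fin d₁) (Fin d₁) ℝ)
    (Qm : Matrix (Fin d₂) (Fin d₂) ℝ),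
    1 ≤ d₁ ∧ 1 ≤ d₂ ∧ Qp.PosDef ∧ Qm.PosDef ∧
    Q = (Matrix.fromBlocks Qp 0 0 (-Qm)).submatrix
      (fun i => finSumFinEquiv.symm (Fin.cast h.symm i))
      (fun i => finSumFinEquiv.symm (Fin.cast h.symm i))

/-- Casting an integer vector to a real vector. -/
def intVec {d : ℕ} (m : Fin d → ℤ) : Fin d → ℝ := fun i => (m i : ℝ)

/-- Number of lattice points in a set `B ⊆ ℝ^d`. -/
noncomputable def latticeCount {d : ℕ} (B : Set (Fin d → ℝ)) : ℕ :=
  (B ∩ Set.range intVec).ncard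

/-- The hyperbolic shell intersected with the cube:
`H_{r,M} = {x : a ≤ Q[x−M] ≤ b} ∩ {x : |x|_∞ ≤ r}` (the sup-norm is the norm of `Fin d → ℝ`). -/
noncomputable def Hset {d : ℕ} (Q : Matrix (Fin d) (Fin d) ℝ) (a b : ℝ) (M : Fin d → ℝ)
    (r : ℝ) : Set (Fin d → ℝ) :=
  {x | (a ≤ quadForm Q (x - M) ∧ quadForm Q (x - M) ≤ b) ∧ ‖x‖ ≤ r}

/-- Relative lattice point remainder `Δ(r,M)`. -/
noncomputable def DeltaRel {d : ℕ} (Q : Matrix (Fin d) (Fin d) ℝ) (a b : ℝ) (M : Fin d → ℝ)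
    (r : ℝ) : ℝ :=
  |((latticeCount (Hset Q a b M r) : ℝ) - (volume (Hset Q a b M r)).toReal) /
    (volume (Hset Q a b M r)).toReal|


/-- `Q` is rational if `λ·Q` has integer entries for some real `λ ≠ 0`. -/
def IsRationalMat {d : ℕ} (Q : Matrix (Fin d) (Fin d) ℝ) : Prop :=
  ∃ lam : ℝ, lam ≠ 0 ∧ ∀ i j, ∃ m : ℤ, lam * Q i j = (m : ℝ)

/-- `F_{r,M}(b) = {x : Q[x−M] ≤ b, |x|_∞ ≤ r}`. -/
noncomputable def Fset {d : ℕ} (Q : Matrix (Fin d) (Fin d) ℝ) (b : ℝ) (M : Fin d → ℝ)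
    (r : ℝ) : Set (Fin d → ℝ) :=
  {x | quadForm Q (x - M) ≤ b ∧ ‖x‖ ≤ r}

/-- Relative lattice point remainder of `F_{r,M}(b)`. -/
noncomputable def DeltaDistr {d : ℕ} (Q : Matrix (Fin d) (Fin d) ℝ) (b : ℝ) (M : Fin d → ℝ)
    (r : ℝ) : ℝ :=
  |((latticeCount (Fset Q b M r) : ℝ) - (volume (Fset Q b M r)).toReal) /
    (volume (Fset Q b M r)).toReal|

/-! ### The quadratic form and its null cone -/

lemma quadForm_single {d : ℕ} (Q : Matrix (Fin d) (Fin d) ℝ) (i : Fin d) :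
    quadForm Q (Pi.single i 1) = Q i i := by
  simp [quadForm, Pi.single_apply]

lemma quadForm_smul {d : ℕ} (Q : Matrix (Fin d) (Fin d) ℝ) (t : ℝ) (x : Fin d → ℝ) :
    quadForm Q (t • x) = t ^ 2 * quadForm Q x := by
  simp only [quadForm, Matrix.mulVec_smul, Pi.smul_apply, smul_eq_mul, Finset.mul_sum]
  exact Finset.sum_congr rfl fun i _ => by ring

lemma exists_quadForm_add_smul {d : ℕ} (Q : Matrix (Fin d) (Fin d) ℝ) (x e : Fin d → ℝ) :
    ∃ B : ℝ, ∀ t : ℝ, quadForm Q (x + t • e) = quadForm Q x + t * B + t ^ 2 * quadForm Q e := by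
  refine ⟨∑ i, (Q.mulVec x i * e i + Q.mulVec e i * x i), fun t => ?_⟩
  simp only [quadForm, Matrix.mulVec_add, Matrix.mulVec_smul, Pi.add_apply, Pi.smul_apply,
    smul_eq_mul, Finset.mul_sum, ← Finset.sum_add_distrib]
  exact Finset.sum_congr rfl fun i _ => by ring

lemma continuous_quadForm {d : ℕ} (Q : Matrix (Fin d) (Fin d) ℝ) : Continuous (quadForm Q) := by
  unfold quadForm Matrix.mulVec dotProduct
  fun_prop

lemma IsBlockType.exists_quadForm_neg {d : ℕ} {Q : Matrix (Fin d) (Fin d) ℝ}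
    (h : IsBlockType Q) : ∃ e, quadForm Q e < 0 := by
  obtain ⟨d₁, d₂, hd, Qp, Qm, -, h2, -, hm, rfl⟩ := h
  refine ⟨Pi.single (Fin.cast hd (finSumFinEquiv (Sum.inr ⟨0, h2⟩))) 1, ?_⟩
  rw [quadForm_single]
  have hpos := hm.diag_pos (i := ⟨0, h2⟩)
  have hcast : ∀ k : Fin (d₁ + d₂), Fin.cast hd.symm (Fin.cast hd k) = k := fun _ => rfl
  rw [Matrix.submatrix_apply, hcast, Equiv.symm_apply_apply, Matrix.fromBlocks_apply₂₂,
    Matrix.neg_apply]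
  exact neg_neg_of_pos hpos

/-- The cone `Q[x] = 0` is Lebesgue-null: each line in a direction `e` with `Q[e] ≠ 0` meets it in
at most two points, so Fubini's theorem applies. -/
lemma ae_quadForm_ne_zero {d : ℕ} (Q : Matrix (Fin d) (Fin d) ℝ) {e : Fin d → ℝ}
    (he : quadForm Q e ≠ 0) : ∀ᵐ x : Fin d → ℝ, quadForm Q x ≠ 0 := by
  refine ae_mem_of_ae_add_linearMap_mem (LinearMap.toSpanSingleton ℝ (Fin d → ℝ) e)
    (volume : Measure ℝ) volume (s := {x | quadForm Q x ≠ 0})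
    ((isOpen_ne_fun (continuous_quadForm Q) continuous_const).measurableSet) fun x => ?_
  obtain ⟨B, hB⟩ := exists_quadForm_add_smul Q x e
  set p : Polynomial ℝ := Polynomial.C (quadForm Q e) * Polynomial.X ^ 2
    + Polynomial.C B * Polynomial.X + Polynomial.C (quadForm Q x) with hp
  have hp0 : p ≠ 0 := by
    intro h0
    apply he
    have := congrArg (fun q => Polynomial.coeff q 2) h0
    simpa [hp, Polynomial.coeff_X, Polynomial.coeff_C] using this
  have hfin : (p.rootSet ℝ).Finite := Polynomial.rootSet_finite p ℝ
  have hnull : ∀ᵐ t : ℝ, t ∉ p.rootSet ℝ := measure_eq_zero_iff_ae_notMem.1 (hfin.measure_zero _)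
  filter_upwards [hnull] with t ht h0
  apply ht
  rw [Polynomial.mem_rootSet]
  refine ⟨hp0, ?_⟩
  simp only [LinearMap.toSpanSingleton_apply] at h0
  rw [hB] at h0
  simp only [hp, Polynomial.coe_aeval_eq_eval, Polynomial.eval_add, Polynomial.eval_mul,
    Polynomial.eval_C, Polynomial.eval_pow, Polynomial.eval_X]
  linarith

/-! ### Counting lattice points by unit cubes -/

/-- Coordinatewise integer part of a real vector, as an integer vector. -/
noncomputable def floorVec {d : ℕ} (x : Fin d → ℝ) : Fin d → ℤ := fun i => ⌊x i⌋

lemma measurable_floorVec {d : ℕ} : Measurable (floorVec (d := d)) :=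
  measurable_pi_lambda _ fun i => Int.measurable_floor.comp (measurable_pi_apply i)

lemma volume_floorVec_preimage_singleton {d : ℕ} (m : Fin d → ℤ) :
    volume (floorVec ⁻¹' {m}) = 1 := by
  have : (floorVec ⁻¹' {m} : Set (Fin d → ℝ))
      = Set.pi Set.univ fun i => Set.Ico (m i : ℝ) (m i + 1) := by
    ext x
    simp [floorVec, funext_iff, Int.floor_eq_iff]
  rw [this, Real.volume_pi_Ico]
  simp

lemma norm_intVec_floorVec_sub_le {d : ℕ} (x : Fin d → ℝ) : ‖intVec (floorVec x) - x‖ ≤ 1 := by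
  refine (pi_norm_le_iff_of_nonneg zero_le_one).2 fun i => ?_
  rw [Real.norm_eq_abs, abs_le]
  simp only [Pi.sub_apply, intVec, floorVec]
  constructor <;> linarith [Int.floor_le (x i), Int.lt_floor_add_one (x i)]

lemma intVec_injective {d : ℕ} : Function.Injective (intVec (d := d)) := fun m n h => by
  funext i
  exact Int.cast_injective (α := ℝ) (congrFun h i)

lemma finite_intVec_preimage {d : ℕ} {F : Set (Fin d → ℝ)} (hF : Bornology.IsBounded F) :
    (intVec ⁻¹' F).Finite := by
  obtain ⟨R, hR⟩ := hF.exists_norm_le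
  refine (Set.Finite.pi' fun _ : Fin d => Set.finite_Icc (-⌈R⌉) ⌈R⌉).subset fun m hm i => ?_
  have h1 : |(m i : ℝ)| ≤ ⌈R⌉ := (norm_le_pi_norm (intVec m) i).trans ((hR _ hm).trans (Int.le_ceil R))
  rw [abs_le] at h1
  exact ⟨by exact_mod_cast h1.1, by exact_mod_cast h1.2⟩

/-- Lattice points in a bounded set are counted by the volume of the union of the unit cubes
`m + [0,1)^d` attached to them. -/
lemma volume_floorVec_preimage {d : ℕ} {F : Set (Fin d → ℝ)} (hF : Bornology.IsBounded F) :
    volume {x | intVec (floorVec x) ∈ F} = (latticeCount F : ENNReal) := by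
  have hfin := finite_intVec_preimage hF
  have hset : {x : Fin d → ℝ | intVec (floorVec x) ∈ F}
      = floorVec ⁻¹' (hfin.toFinset : Set (Fin d → ℤ)) := by
    ext x; simp
  rw [hset, ← sum_measure_preimage_singleton _
    fun m _ => measurable_floorVec (measurableSet_singleton m)]
  simp only [volume_floorVec_preimage_singleton, Finset.sum_const, nsmul_eq_mul, mul_one]
  rw [latticeCount, ← Set.image_preimage_eq_inter_range,
    Set.ncard_image_of_injective _ intVec_injective, Set.ncard_eq_toFinset_card _ hfin]

/-! ### Rescaling and passing to the limit -/

lemma isBounded_Fset {d : ℕ} (Q : Matrix (Fin d) (Fin d) ℝ) (b : ℝ) (M : Fin d → ℝ) (r : ℝ) :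
    Bornology.IsBounded (Fset Q b M r) :=
  isBounded_iff_forall_norm_le.2 ⟨r, fun _ hx => hx.2⟩

lemma measurableSet_Fset {d : ℕ} (Q : Matrix (Fin d) (Fin d) ℝ) (b : ℝ) (M : Fin d → ℝ) (r : ℝ) :
    MeasurableSet (Fset Q b M r) :=
  ((isClosed_le ((continuous_quadForm Q).comp (continuous_id.sub continuous_const))
    continuous_const).inter (isClosed_le continuous_norm continuous_const)).measurableSet

/-- Off the boundary of the limit region `{Q ≤ 0, |y|_∞ ≤ 1}`, membership in the rescaled region
`r⁻¹ F_{r,M}(b)` stabilises, even along points `u r` moving towards `y`. -/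
lemma eventually_smul_mem_Fset_iff {d : ℕ} (Q : Matrix (Fin d) (Fin d) ℝ) (b : ℝ)
    (M : Fin d → ℝ) {y : Fin d → ℝ} (hQ : quadForm Q y ≠ 0) (hy : ‖y‖ ≠ 1)
    {u : ℝ → Fin d → ℝ} (hu : Tendsto u atTop (nhds y)) :
    ∀ᶠ r in atTop, (r • u r ∈ Fset Q b M r ↔ y ∈ Fset Q 0 0 1) := by
  have hinv : Tendsto (fun r : ℝ => r⁻¹) atTop (nhds 0) := tendsto_inv_atTop_zero
  have h1 : Tendsto (fun r => quadForm Q (u r - r⁻¹ • M) - (r⁻¹) ^ 2 * b) atTop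
      (nhds (quadForm Q y)) := by
    have h := (((continuous_quadForm Q).tendsto _).comp (hu.sub (hinv.smul_const M))).sub
      ((hinv.pow 2).mul_const b)
    simpa using h
  have h2 : Tendsto (fun r => ‖u r‖) atTop (nhds ‖y‖) := hu.norm
  have e1 : ∀ᶠ r in atTop,
      (quadForm Q (u r - r⁻¹ • M) - (r⁻¹) ^ 2 * b ≤ 0 ↔ quadForm Q y ≤ 0) := by
    rcases lt_or_gt_of_ne hQ with h | h
    · filter_upwards [h1.eventually_lt_const h] with r hr
      exact iff_of_true hr.le h.le
    · filter_upwards [h1.eventually_const_lt h] with r hr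
      exact iff_of_false hr.not_ge h.not_ge
  have e2 : ∀ᶠ r in atTop, (‖u r‖ ≤ 1 ↔ ‖y‖ ≤ 1) := by
    rcases lt_or_gt_of_ne hy with h | h
    · filter_upwards [h2.eventually_lt_const h] with r hr
      exact iff_of_true hr.le h.le
    · filter_upwards [h2.eventually_const_lt h] with r hr
      exact iff_of_false hr.not_ge h.not_ge
  filter_upwards [e1, e2, eventually_gt_atTop 0] with r hr1 hr2 hr
  have hs : r • u r - M = r • (u r - r⁻¹ • M) := by
    rw [smul_sub, smul_inv_smul₀ hr.ne']
  have hr2' : 0 < r ^ 2 := by positivity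
  have hb : r ^ 2 * quadForm Q (u r - r⁻¹ • M) ≤ b
      ↔ quadForm Q (u r - r⁻¹ • M) - (r⁻¹) ^ 2 * b ≤ 0 := by
    rw [sub_nonpos, inv_pow, le_inv_mul_iff₀ hr2']
  have hn : r * ‖u r‖ ≤ r ↔ ‖u r‖ ≤ 1 := mul_le_iff_le_one_right hr
  simp only [Fset, Set.mem_ofPred_eq, hs, quadForm_smul, norm_smul, Real.norm_eq_abs,
    abs_of_pos hr, sub_zero, hb, hn, hr1, hr2]

/-- If the points `u r y` approximate `y` to within `1/r`, then the set of `y` with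
`r • u r y ∈ F_{r,M}(b)` has volume converging to that of `{Q ≤ 0, |y|_∞ ≤ 1}`. -/
lemma tendsto_volume_smul_mem_Fset {d : ℕ} [Nonempty (Fin d)] (Q : Matrix (Fin d) (Fin d) ℝ)
    (b : ℝ) (M : Fin d → ℝ) {e : Fin d → ℝ} (he : quadForm Q e ≠ 0)
    {u : ℝ → (Fin d → ℝ) → Fin d → ℝ} (hmeas : ∀ r, Measurable (u r))
    (hu : ∀ r, 0 < r → ∀ y, ‖u r y - y‖ ≤ r⁻¹) :
    Tendsto (fun r => volume {y | r • u r y ∈ Fset Q b M r}) atTop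
      (nhds (volume (Fset Q 0 0 1))) := by
  refine tendsto_measure_of_ae_tendsto_indicator atTop (measurableSet_Fset Q 0 0 1)
    (fun r => ((hmeas r).const_smul r) (measurableSet_Fset Q b M r))
    (B := Metric.closedBall 0 2) measurableSet_closedBall measure_closedBall_lt_top.ne ?_ ?_
  · filter_upwards [eventually_ge_atTop 1] with r hr y hy
    have hr0 : 0 < r := by linarith
    have h1 : ‖u r y‖ ≤ 1 := by
      have := hy.2
      rwa [norm_smul, Real.norm_eq_abs, abs_of_pos hr0, mul_le_iff_le_one_right hr0] at this
    have h2 := hu r hr0 y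
    have h3 : r⁻¹ ≤ 1 := inv_le_one_of_one_le₀ hr
    have h4 := norm_sub_norm_le y (u r y)
    rw [norm_sub_rev] at h4
    rw [mem_closedBall_zero_iff]
    linarith
  · have hsph : ∀ᵐ y : Fin d → ℝ, ‖y‖ ≠ 1 := by
      have := measure_eq_zero_iff_ae_notMem.1
        (Measure.addHaar_sphere (volume : Measure (Fin d → ℝ)) 0 1)
      filter_upwards [this] with y hy h
      exact hy (mem_sphere_zero_iff_norm.2 h)
    filter_upwards [ae_quadForm_ne_zero Q he, hsph] with y hQ hy
    refine eventually_smul_mem_Fset_iff Q b M hQ hy (u := fun r => u r y) ?_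
    rw [tendsto_iff_norm_sub_tendsto_zero]
    refine squeeze_zero' (Eventually.of_forall fun _ => norm_nonneg _) ?_ tendsto_inv_atTop_zero
    filter_upwards [eventually_gt_atTop 0] with r hr using hu r hr y

lemma volume_Fset_zero_pos {d : ℕ} (Q : Matrix (Fin d) (Fin d) ℝ) {e : Fin d → ℝ}
    (he : quadForm Q e < 0) : 0 < volume (Fset Q 0 0 1) := by
  have ho : IsOpen {x : Fin d → ℝ | quadForm Q x < 0 ∧ ‖x‖ < 1} :=
    (isOpen_lt (continuous_quadForm Q) continuous_const).inter
      (isOpen_lt continuous_norm continuous_const)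
  have hpos : 0 < 1 + ‖e‖ := by positivity
  refine (ho.measure_pos volume ⟨(1 + ‖e‖)⁻¹ • e, ?_, ?_⟩).trans_le (measure_mono fun x hx => ?_)
  · rw [quadForm_smul]
    exact mul_neg_of_pos_of_neg (by positivity) he
  · rw [norm_smul, norm_inv, Real.norm_eq_abs, abs_of_pos hpos, inv_mul_lt_iff₀ hpos]
    linarith
  · exact ⟨by simpa using hx.1.le, hx.2.le⟩

/-- The relative remainder tends to `0` for every form taking a negative value: numerator and
denominator are both asymptotic to `r ^ d * vol {Q ≤ 0, |y|_∞ ≤ 1}`. -/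
lemma tendsto_DeltaDistr {d : ℕ} [Nonempty (Fin d)] (Q : Matrix (Fin d) (Fin d) ℝ)
    (b : ℝ) (M : Fin d → ℝ) {e : Fin d → ℝ} (he : quadForm Q e < 0) :
    Tendsto (fun r => DeltaDistr Q b M r) atTop (nhds 0) := by
  set V := volume (Fset Q 0 0 1) with hV
  have hVpos : 0 < V := volume_Fset_zero_pos Q he
  have hVfin : V ≠ ⊤ := (isBounded_Fset Q 0 0 1).measure_lt_top.ne
  have hVr : V.toReal ≠ 0 := (ENNReal.toReal_pos hVpos.ne' hVfin).ne'
  have hvol := (ENNReal.tendsto_toReal hVfin).comp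
    (tendsto_volume_smul_mem_Fset Q b M he.ne (u := fun _ y => y) (fun _ => measurable_id)
      (fun r hr y => by simpa using hr.le))
  have hcnt := (ENNReal.tendsto_toReal hVfin).comp
    (tendsto_volume_smul_mem_Fset Q b M he.ne
      (u := fun r y => r⁻¹ • intVec (floorVec (r • y)))
      (fun r => by
        have h : Measurable (intVec (d := d)) := measurable_of_countable _
        exact (h.comp (measurable_floorVec.comp (measurable_const_smul r))).const_smul r⁻¹)
      (fun r hr y => by
        have h : r⁻¹ • intVec (floorVec (r • y)) - y
            = r⁻¹ • (intVec (floorVec (r • y)) - r • y) := by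
          rw [smul_sub, inv_smul_smul₀ hr.ne']
        rw [h, norm_smul, norm_inv, Real.norm_eq_abs, abs_of_pos hr]
        exact mul_le_of_le_one_right (by positivity) (norm_intVec_floorVec_sub_le _)))
  have hlim := (((hcnt.sub hvol).div hvol hVr)).abs
  rw [sub_self, zero_div, abs_zero] at hlim
  refine hlim.congr' ?_
  filter_upwards [eventually_gt_atTop 0] with r hr
  have hscale : ∀ S : Set (Fin d → ℝ),
      (volume {y | r • y ∈ S}).toReal = (r ^ d)⁻¹ * (volume S).toReal := by
    intro S
    have := Measure.addHaar_preimage_smul (volume : Measure (Fin d → ℝ)) hr.ne' S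
    rw [Set.preimage] at this
    rw [this, ENNReal.toReal_mul, ENNReal.toReal_ofReal (abs_nonneg _),
      abs_of_pos (by positivity), Module.finrank_fin_fun]
  have hc : (volume {y | r • r⁻¹ • intVec (floorVec (r • y)) ∈ Fset Q b M r}).toReal
      = (r ^ d)⁻¹ * (latticeCount (Fset Q b M r) : ℝ) := by
    simp only [smul_inv_smul₀ hr.ne']
    have := hscale {x | intVec (floorVec x) ∈ Fset Q b M r}
    rw [volume_floorVec_preimage (isBounded_Fset Q b M r), ENNReal.toReal_natCast] at this
    exact this
  have hrd : (r ^ d)⁻¹ ≠ 0 := by positivity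
  simp only [Pi.div_apply, Function.comp_apply, hc, hscale, DeltaDistr]
  rw [← mul_sub, mul_div_mul_left _ _ hrd]

/-- Distribution-function version (Theorem `thdistr`): for a non-degenerate block-type form,
`d ≥ 5`, the relative lattice remainder of `F_{r,M}(b)` is `O(1)` as `r → ∞`, and `o(1)`
provided `Q` is irrational. -/
theorem deltaDistr_asymptotics (d : ℕ) (hd : 5 ≤ d) (Q : Matrix (Fin d) (Fin d) ℝ)
    (hsym : Q.IsSymm) (hdet : IsUnit Q.det) (hblock : IsBlockType Q)
    (b : ℝ) (M : Fin d → ℝ) :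
    (∃ C > (0:ℝ), ∃ r₁ > (0:ℝ), ∀ r : ℝ, r₁ ≤ r → DeltaDistr Q b M r ≤ C) ∧
    (¬ IsRationalMat Q → Tendsto (fun r => DeltaDistr Q b M r) atTop (nhds 0)) := by
  have : Nonempty (Fin d) := ⟨⟨0, by omega⟩⟩
  obtain ⟨e, he⟩ := hblock.exists_quadForm_neg
  have h := tendsto_DeltaDistr Q b M he
  refine ⟨?_, fun _ => h⟩
  obtain ⟨r₁, hr₁⟩ := eventually_atTop.1 (h.eventually_le_const one_pos)
  exact ⟨1, one_pos, max r₁ 1, by positivity, fun r hr => hr₁ r ((le_max_left _ _).trans hr)⟩
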